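/- Let A be an n × n symmetric matrix with integer entries such that (i) det A = 1 or det A = -1, (ii) every diagonal entry of A is even, and (iii) the signature of A is zero, where the signature is the number of positive eigenvalues minus the number of negative eigenvalues of A regarded as a real symmetric matrix. Then n is even, say n = 2m, and A is integrally congruent to the block-diagonal direct sum of m copies of the 2 × 2 matrix [[0,1],[1,0]]; that is, there exists an n × n integer matrix P with det P = ±1 such that Pᵀ A P equals this direct sum. -/

import Mathlib

/-- The block-diagonal direct sum of `n/2` copies of the hyperbolic plane
matrix `[[0,1],[1,0]]`, as an `n × n` integer matrix: the `k`-th diagonal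
`2 × 2` block occupies rows/columns `2k, 2k+1`. -/
def hyperbolicSum (n : ℕ) : Matrix (Fin n) (Fin n) ℤ :=
  fun i j => if (i : ℕ) / 2 = (j : ℕ) / 2 ∧ (i : ℕ) ≠ (j : ℕ) then 1 else 0

/-!
Over a field of characteristic different from `2`, the Witt classes of two nonsingular symmetric
forms agree if and only if the orthogonal sum of one with the negative of the other is metabolic.
The Witt group of `ℚ` is filtered by the subgroups generated by the forms `⟨u⟩` with `u` a
`p`-smooth integer. The step from `p` to `p + 1` is controlled by the residue field: modulo smaller
primes, the form `⟨p u⟩` depends only on the residue of `u` modulo `p`, so every class in the larger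
subgroup is represented by smooth forms plus `p` times a form that is anisotropic modulo `p`. If the
class comes from a unimodular integral form, then reducing a Lagrangian lattice modulo `p` shows
that the anisotropic part is empty. Descending through all primes, the class of `A` is a sum of
forms `⟨±1⟩`, hence a multiple of `⟨1⟩` that the signature detects. So if the signature is zero,
`A` is metabolic over `ℚ`, and over `ℤ` by passing to the integral points of a Lagrangian subspace.
Evenness writes `A` as `S + Sᵀ`, which corrects a complement of the Lagrangian lattice to an
isotropic one, giving a hyperbolic basis.
-/

open Matrix Module Finset

section Metabolic

variable {R S ι κ : Type*} [CommRing R] [CommRing S] [Fintype ι] [Fintype κ]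

theorem mulVec_dotProduct_mulVec_mulVec (M : Matrix ι ι R) (X : Matrix ι κ R) (u v : κ → R) :
    (X *ᵥ u) ⬝ᵥ M *ᵥ (X *ᵥ v) = u ⬝ᵥ (Xᵀ * M * X) *ᵥ v := by
  rw [← vecMul_transpose, ← dotProduct_mulVec, mulVec_mulVec, mulVec_mulVec, Matrix.mul_assoc]

/-- A square matrix `M`, viewed as a bilinear form on `ι → R`, is metabolic if it vanishes on a free
direct summand of at least half the rank. The summand is encoded by a matrix `X` whose columns
form a basis of it, together with a left inverse `Y`, so that the notion survives base change. -/
def IsMetabolic (M : Matrix ι ι R) : Prop :=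
  ∃ (d : ℕ) (X : Matrix ι (Fin d) R) (Y : Matrix (Fin d) ι R),
    Y * X = 1 ∧ Xᵀ * M * X = 0 ∧ Fintype.card ι ≤ 2 * d

namespace IsMetabolic

theorem of_left_inverse [DecidableEq κ] {M : Matrix ι ι R} (X : Matrix ι κ R) (Y : Matrix κ ι R)
    (hYX : Y * X = 1) (hM : Xᵀ * M * X = 0) (hcard : Fintype.card ι ≤ 2 * Fintype.card κ) :
    IsMetabolic M := by
  let e := Fintype.equivFin κ
  refine ⟨Fintype.card κ, X.submatrix id e.symm, Y.submatrix e.symm id, ?_, ?_, hcard⟩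
  · rw [← submatrix_mul Y X _ _ _ Function.bijective_id, hYX, submatrix_one_equiv]
  · change Xᵀ.submatrix e.symm id * M.submatrix id id * X.submatrix id e.symm = 0
    rw [← submatrix_mul _ _ _ _ _ Function.bijective_id,
      ← submatrix_mul _ _ _ _ _ Function.bijective_id, hM, submatrix_zero]
    rfl

theorem map {M : Matrix ι ι R} (hM : IsMetabolic M) (f : R →+* S) : IsMetabolic (M.map f) := by
  obtain ⟨d, X, Y, hYX, hX, hd⟩ := hM
  refine ⟨d, X.map f, Y.map f, ?_, ?_, hd⟩
  · rw [← Matrix.map_mul, hYX, Matrix.map_one f f.map_zero f.map_one]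
  · rw [← transpose_map, ← Matrix.map_mul, ← Matrix.map_mul, hX, Matrix.map_zero f f.map_zero]

theorem submatrix {M : Matrix ι ι R} (hM : IsMetabolic M) (e : κ ≃ ι) :
    IsMetabolic (M.submatrix e e) := by
  obtain ⟨d, X, Y, hYX, hX, hd⟩ := hM
  refine ⟨d, X.submatrix e id, Y.submatrix id e, ?_, ?_, (Fintype.card_congr e).trans_le hd⟩
  · rw [submatrix_mul_equiv, hYX, submatrix_id_id]
  · rw [transpose_submatrix, submatrix_mul_equiv, submatrix_mul_equiv, hX, submatrix_id_id]

theorem congr [DecidableEq ι] {M P Q : Matrix ι ι R} (hM : IsMetabolic M) (hPQ : P * Q = 1) :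
    IsMetabolic (Pᵀ * M * P) := by
  obtain ⟨d, X, Y, hYX, hX, hd⟩ := hM
  refine ⟨d, Q * X, Y * P, ?_, ?_, hd⟩
  · rw [Matrix.mul_assoc, ← Matrix.mul_assoc P, hPQ, Matrix.one_mul, hYX]
  · calc (Q * X)ᵀ * (Pᵀ * M * P) * (Q * X) = Xᵀ * (P * Q)ᵀ * M * ((P * Q) * X) := by
          simp only [transpose_mul, Matrix.mul_assoc]
      _ = 0 := by rw [hPQ, transpose_one, Matrix.mul_one, Matrix.one_mul, hX]

theorem fromBlocks_diag {M : Matrix ι ι R} {N : Matrix κ κ R} (hM : IsMetabolic M)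
    (hN : IsMetabolic N) : IsMetabolic (fromBlocks M 0 0 N) := by
  obtain ⟨d, X, Y, hYX, hX, hd⟩ := hM
  obtain ⟨e, Z, W, hWZ, hZ, he⟩ := hN
  refine of_left_inverse (fromBlocks X 0 0 Z) (fromBlocks Y 0 0 W) ?_ ?_ ?_
  · simp [fromBlocks_multiply, hYX, hWZ]
  · simp [fromBlocks_transpose, fromBlocks_multiply, hX, hZ]
  · simp only [Fintype.card_sum, Fintype.card_fin]
    lia

end IsMetabolic

theorem isMetabolic_congr_iff [DecidableEq ι] {M P Q : Matrix ι ι R} (hPQ : P * Q = 1) :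
    IsMetabolic (Pᵀ * M * P) ↔ IsMetabolic M := by
  refine ⟨fun h => ?_, fun h => h.congr hPQ⟩
  have hM : Qᵀ * (Pᵀ * M * P) * Q = (P * Q)ᵀ * M * (P * Q) := by
    simp only [transpose_mul, Matrix.mul_assoc]
  rw [hPQ, transpose_one, Matrix.one_mul, Matrix.mul_one] at hM
  exact hM ▸ h.congr (mul_eq_one_comm.mp hPQ)

/-- The summand is the graph of `P`. -/
theorem isMetabolic_fromBlocks_neg_congr (M : Matrix ι ι R) (P : Matrix ι κ R)
    (hcard : Fintype.card ι ≤ Fintype.card κ) :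
    IsMetabolic (fromBlocks M 0 0 (-(Pᵀ * M * P))) := by
  classical
  refine IsMetabolic.of_left_inverse (fromRows P 1) (fromCols 0 1) ?_ ?_ ?_
  · simp [fromCols_mul_fromRows]
  · simp [transpose_fromRows, fromCols_mul_fromBlocks, fromCols_mul_fromRows]
  · rw [Fintype.card_sum]
    lia

end Metabolic

section Field

variable {K ι κ : Type*} [Field K] [Fintype ι] [Fintype κ]

theorem isMetabolic_iff_exists_submodule {M : Matrix ι ι K} :
    IsMetabolic M ↔ ∃ I : Submodule K (ι → K),
      (∀ x ∈ I, ∀ y ∈ I, x ⬝ᵥ M *ᵥ y = 0) ∧ Fintype.card ι ≤ 2 * finrank K I := by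
  classical
  constructor
  · rintro ⟨d, X, Y, hYX, hX, hd⟩
    have hinj : Function.Injective X.mulVecLin := fun u v huv => by
      have := congrArg (Y *ᵥ ·) huv
      simpa [hYX] using this
    refine ⟨LinearMap.range X.mulVecLin, ?_, ?_⟩
    · rintro _ ⟨u, rfl⟩ _ ⟨v, rfl⟩
      rw [mulVecLin_apply, mulVecLin_apply, mulVec_dotProduct_mulVec_mulVec, hX, zero_mulVec,
        dotProduct_zero]
    · rwa [LinearMap.finrank_range_of_inj hinj, finrank_fin_fun]
  · rintro ⟨I, hI, hcard⟩
    let f : (Fin (finrank K I) → K) →ₗ[K] ι → K :=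
      I.subtype ∘ₗ (finBasis K I).equivFun.symm.toLinearMap
    obtain ⟨g, hg⟩ := f.exists_leftInverse_of_injective (LinearMap.ker_eq_bot.mpr
      (I.injective_subtype.comp (finBasis K I).equivFun.symm.injective))
    refine ⟨finrank K I, f.toMatrix', g.toMatrix', ?_, ?_, hcard⟩
    · rw [← LinearMap.toMatrix'_comp, hg, LinearMap.toMatrix'_id]
    · ext i j
      have := hI _ ((finBasis K I).equivFun.symm (Pi.single i 1)).2
        _ ((finBasis K I).equivFun.symm (Pi.single j 1)).2
      change f (Pi.single i 1) ⬝ᵥ M *ᵥ f (Pi.single j 1) = 0 at this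
      rw [← LinearMap.toMatrix'_mulVec f, ← LinearMap.toMatrix'_mulVec f,
        mulVec_dotProduct_mulVec_mulVec] at this
      simpa using this

theorem finrank_add_finrank_le_of_dotProduct_mulVec_eq_zero {M : Matrix ι ι K} [DecidableEq ι]
    (hM : M.det ≠ 0) {U V : Submodule K (ι → K)} (hUV : ∀ u ∈ U, ∀ v ∈ V, u ⬝ᵥ M *ᵥ v = 0) :
    finrank K U + finrank K V ≤ Fintype.card ι := by
  let B : (ι → K) →ₗ[K] (ι → K) →ₗ[K] K := Matrix.toLinearMap₂' K M
  have hB : Function.Injective B := LinearMap.ker_eq_bot.mp <|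
    LinearMap.separatingLeft_iff_ker_eq_bot.mp
      (LinearMap.separatingLeft_toLinearMap₂'_of_det_ne_zero' hM)
  have hle : U.map B ≤ V.dualAnnihilator := by
    rintro _ ⟨u, hu, rfl⟩
    rw [Submodule.mem_dualAnnihilator]
    intro v hv
    rw [Matrix.toLinearMap₂'_apply', hUV u hu v hv]
  calc finrank K U + finrank K V = finrank K (U.map B) + finrank K V := by
        rw [(Submodule.equivMapOfInjective B hB U).finrank_eq]
    _ ≤ finrank K V.dualAnnihilator + finrank K V := by gcongr; exact Submodule.finrank_mono hle
    _ = Fintype.card ι := by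
        rw [add_comm, Subspace.finrank_add_finrank_dualAnnihilator_eq, finrank_fintype_fun_eq_card]

end Field

section Cancellation

variable {K V W : Type*} [Field K] [AddCommGroup V] [AddCommGroup W] [Module K V] [Module K W]

theorem finrank_map_add_finrank_inf_ker [FiniteDimensional K V] (f : V →ₗ[K] W)
    (S : Submodule K V) : finrank K (S.map f) + finrank K ↥(S ⊓ LinearMap.ker f) = finrank K S := by
  rw [← (f.domRestrict S).finrank_range_add_finrank_ker, LinearMap.range_domRestrict,
    LinearMap.ker_domRestrict, ← Submodule.map_comap_subtype]
  congr 1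
  exact (Submodule.equivMapOfInjective _ S.injective_subtype _).finrank_eq.symm

theorem finrank_map_inr_inf_ker_inl {ι κ : Type*} [Finite ι] [Finite κ]
    (L : Submodule K (ι ⊕ κ → K)) :
    finrank K ((L ⊓ LinearMap.ker (LinearMap.funLeft K K Sum.inl)).map
        (LinearMap.funLeft K K Sum.inr)) =
      finrank K ↥(L ⊓ LinearMap.ker (LinearMap.funLeft K K Sum.inl)) := by
  rw [← finrank_map_add_finrank_inf_ker (LinearMap.funLeft K K Sum.inr), left_eq_add,
    Submodule.finrank_eq_zero, Submodule.eq_bot_iff]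
  rintro x ⟨⟨-, hx⟩, hx'⟩
  ext (i | i)
  · exact congrFun hx i
  · exact congrFun hx' i

variable {ι κ : Type*} [Fintype ι] [Fintype κ]

theorem dotProduct_fromBlocks_diag_mulVec (M : Matrix ι ι K) (N : Matrix κ κ K) (x y : ι ⊕ κ → K) :
    x ⬝ᵥ fromBlocks M 0 0 N *ᵥ y =
      (x ∘ Sum.inl) ⬝ᵥ M *ᵥ (y ∘ Sum.inl) + (x ∘ Sum.inr) ⬝ᵥ N *ᵥ (y ∘ Sum.inr) := by
  simp [fromBlocks_mulVec, dotProduct]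

/-- If `I` and `J` are the totally isotropic subspaces given by the hypotheses, then the vectors `x`
with `(x, y) ∈ I` for some `y ∈ J` form the required subspace of `ι → K`. -/
theorem IsMetabolic.of_fromBlocks_diag [DecidableEq κ] {M : Matrix ι ι K} {N : Matrix κ κ K}
    (h : IsMetabolic (fromBlocks M 0 0 N)) (hN : IsMetabolic N) (hdet : N.det ≠ 0) :
    IsMetabolic M := by
  rw [isMetabolic_iff_exists_submodule] at h hN ⊢
  obtain ⟨I, hI, hIcard⟩ := h
  obtain ⟨J, hJ, hJcard⟩ := hN
  let fst : (ι ⊕ κ → K) →ₗ[K] ι → K := LinearMap.funLeft K K Sum.inl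
  let snd : (ι ⊕ κ → K) →ₗ[K] κ → K := LinearMap.funLeft K K Sum.inr
  have hI' (x) (hx : x ∈ I) (y) (hy : y ∈ I) :
      fst x ⬝ᵥ M *ᵥ fst y + snd x ⬝ᵥ N *ᵥ snd y = 0 :=
    (dotProduct_fromBlocks_diag_mulVec M N x y).symm.trans (hI x hx y hy)
  let L := I ⊓ J.comap snd
  refine ⟨L.map fst, ?_, ?_⟩
  · rintro _ ⟨x, hx, rfl⟩ _ ⟨y, hy, rfl⟩
    simpa [hJ _ hx.2 _ hy.2] using hI' x hx.1 y hy.1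
  have hperp : finrank K ((L ⊓ LinearMap.ker fst).map snd) + finrank K ↥(I.map snd ⊔ J) ≤
      Fintype.card κ := by
    refine finrank_add_finrank_le_of_dotProduct_mulVec_eq_zero hdet ?_
    rintro _ ⟨x, ⟨⟨hxI, hxJ⟩, hx⟩, rfl⟩ v hv
    obtain ⟨_, ⟨y, hy, rfl⟩, j, hj, rfl⟩ := Submodule.mem_sup.mp hv
    have hxy := hI' x hxI y hy
    rw [LinearMap.mem_ker.mp hx, zero_dotProduct, zero_add] at hxy
    rw [mulVec_add, dotProduct_add, hxy, hJ _ hxJ _ hj, add_zero]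
  have hinj : finrank K ((L ⊓ LinearMap.ker fst).map snd) = finrank K ↥(L ⊓ LinearMap.ker fst) :=
    finrank_map_inr_inf_ker_inl L
  have hL := finrank_map_add_finrank_inf_ker fst L
  have hI2 := finrank_map_add_finrank_inf_ker snd I
  have hL2 := finrank_map_add_finrank_inf_ker snd L
  have hker : L ⊓ LinearMap.ker snd = I ⊓ LinearMap.ker snd := by
    rw [inf_assoc, inf_eq_right.mpr (LinearMap.ker_le_comap snd)]
  have hsup := Submodule.finrank_sup_add_finrank_inf_eq (I.map snd) J
  rw [Submodule.map_inf_eq_map_inf_comap] at hsup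
  rw [hker] at hL2
  rw [Fintype.card_sum] at hIcard
  change finrank K ↥(I.map snd ⊔ J) + finrank K (L.map snd) = _ at hsup
  lia

end Cancellation

section Signature

theorem IsMetabolic.card_pos_eq_card_neg {K ι : Type*} [Field K] [LinearOrder K]
    [IsStrictOrderedRing K] [Fintype ι] [DecidableEq ι] {w : ι → K}
    (h : IsMetabolic (diagonal w)) (hw : ∀ i, w i ≠ 0) :
    #{i | 0 < w i} = #{i | w i < 0} := by
  obtain ⟨I, hI, hcard⟩ := isMetabolic_iff_exists_submodule.mp h
  have hzero (c : K) (x) (hx : x ∈ I) : QuadraticMap.weightedSumSquares K (c • w) x = 0 := by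
    have := hI x hx x hx
    simp only [dotProduct, mulVec_diagonal] at this
    rw [QuadraticMap.weightedSumSquares_apply]
    calc ∑ i, (c • w) i • (x i * x i) = c * ∑ i, x i * (w i * x i) := by
          rw [Finset.mul_sum]
          exact Finset.sum_congr rfl fun i _ => by simp only [Pi.smul_apply, smul_eq_mul]; ring
      _ = 0 := by rw [this, mul_zero]
  have hle (c : K) : #{i | 0 < (c • w) i} + finrank K I ≤ Fintype.card ι := by
    have := QuadraticForm.sigPos_add_finrank_le_of_nonpos fun x hx => (hzero c x hx).le
    rwa [QuadraticForm.sigPos_weightedSumSquares, Set.ncard_eq_toFinset_card', Set.toFinset_ofPred,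
      finrank_fintype_fun_eq_card] at this
  have hpos := hle 1
  have hneg := hle (-1)
  have htotal : #{i | 0 < w i} + #{i | w i < 0} = Fintype.card ι := by
    rw [← Finset.card_univ, ← Finset.card_filter_add_card_filter_not (s := Finset.univ) (0 < w ·)]
    congr! 3 with i
    grind
  simp only [one_smul, neg_smul, Pi.neg_apply, neg_pos] at hpos hneg
  lia

end Signature

section FractionField

variable {R K ι : Type*} [CommRing R] [Field K] [Algebra R K]

variable (R) in
/-- The lattice of `R`-integral points of a subspace of `K^ι`. -/
def integralPoints (I : Submodule K (ι → K)) : Submodule R (ι → R) :=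
  (I.restrictScalars R).comap ((Algebra.linearMap R K).compLeft ι)

theorem mem_integralPoints {I : Submodule K (ι → K)} {x : ι → R} :
    x ∈ integralPoints R I ↔ algebraMap R K ∘ x ∈ I :=
  Iff.rfl

variable [IsDomain R] [IsFractionRing R K]

instance (I : Submodule K (ι → K)) : IsTorsionFree R ((ι → R) ⧸ integralPoints R I) := by
  refine .of_smul_eq_zero fun r x hx => or_iff_not_imp_left.mpr fun hr => ?_
  obtain ⟨x, rfl⟩ := (integralPoints R I).mkQ_surjective x
  rw [← map_smul, Submodule.mkQ_apply, Submodule.Quotient.mk_eq_zero, mem_integralPoints] at hx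
  rw [Submodule.mkQ_apply, Submodule.Quotient.mk_eq_zero, mem_integralPoints]
  have hrx : algebraMap R K ∘ (r • x) = algebraMap R K r • (algebraMap R K ∘ x) := by
    ext i
    simp
  rwa [hrx, Submodule.smul_mem_iff _ (by simpa using hr)] at hx

variable [IsPrincipalIdealRing R]

theorem finrank_le_finrank_integralPoints [Finite ι] (I : Submodule K (ι → K)) :
    finrank K I ≤ finrank R (integralPoints R I) := by
  let φ : (ι → R) →ₗ[R] ι → K := (Algebra.linearMap R K).compLeft ι
  let b := finBasis R (integralPoints R I)
  let v : Fin (finrank R (integralPoints R I)) → ι → K := fun j => φ (b j)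
  have hspan : I ≤ Submodule.span K (Set.range v) := by
    intro x hx
    obtain ⟨r, hr⟩ := IsLocalization.exist_integer_multiples_of_finite (nonZeroDivisors R) x
    choose y hy using hr
    have hφy : algebraMap R K ∘ y = algebraMap R K r • x := by
      ext i
      exact (hy i).trans (algebraMap_smul K (r : R) (x i)).symm
    have hr0 : algebraMap R K r ≠ 0 := by simp
    rw [← Submodule.smul_mem_iff _ hr0, ← hφy]
    have hyI : y ∈ integralPoints R I := by
      rw [mem_integralPoints, hφy]
      exact I.smul_mem _ hx
    have := Submodule.mem_map_of_mem (f := φ ∘ₗ (integralPoints R I).subtype)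
      (b.mem_span ⟨y, hyI⟩)
    rw [Submodule.map_span, ← Set.range_comp] at this
    exact Submodule.span_le_restrictScalars R K _ this
  calc finrank K I ≤ finrank K (Submodule.span K (Set.range v)) := Submodule.finrank_mono hspan
    _ ≤ finrank R (integralPoints R I) := (finrank_range_le_card v).trans_eq (Fintype.card_fin _)

variable [Fintype ι]

theorem exists_left_inverse_integralPoints (I : Submodule K (ι → K)) :
    ∃ (X : Matrix ι (Fin (finrank R (integralPoints R I))) R)
      (Y : Matrix (Fin (finrank R (integralPoints R I))) ι R),
      Y * X = 1 ∧ ∀ j, X.col j ∈ integralPoints R I := by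
  classical
  let b := (finBasis R (integralPoints R I)).sumQuot (finBasis R ((ι → R) ⧸ integralPoints R I))
  refine ⟨((Pi.basisFun R ι).toMatrix b).submatrix id Sum.inl,
    (b.toMatrix (Pi.basisFun R ι)).submatrix Sum.inl id, ?_, fun j => ?_⟩
  · rw [← submatrix_mul _ _ _ _ _ Function.bijective_id, Basis.toMatrix_mul_toMatrix_flip,
      submatrix_one _ Sum.inl_injective]
  · change b (Sum.inl j) ∈ integralPoints R I
    rw [Basis.sumQuot_inl]
    exact (finBasis R (integralPoints R I) j).2

theorem IsMetabolic.of_map_algebraMap {M : Matrix ι ι R}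
    (h : IsMetabolic (M.map (algebraMap R K))) : IsMetabolic M := by
  obtain ⟨I, hI, hcard⟩ := isMetabolic_iff_exists_submodule.mp h
  obtain ⟨X, Y, hYX, hX⟩ := exists_left_inverse_integralPoints (R := R) I
  have hd := finrank_le_finrank_integralPoints (R := R) I
  refine ⟨_, X, Y, hYX, ?_, by lia⟩
  ext j k
  apply IsFractionRing.injective R K
  have := hI _ (hX j) _ (hX k)
  rw [Matrix.mul_assoc]
  simpa [Matrix.mul_apply, dotProduct, mulVec] using this

end FractionField

section Residue

variable {R F ι κ : Type*} [CommRing R] [IsDomain R] [Field F] [Fintype ι] [Fintype κ]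
  {f : R →+* F} {π : R} {M : Matrix ι ι R} {N : Matrix κ κ R}

theorem mulVecLin_map_injective_of_anisotropic (hf : Function.Surjective f)
    (hπ : π ≠ 0) (hker : ∀ r, f r = 0 ↔ π ∣ r) {μ : Type*} [Fintype μ] [DecidableEq μ]
    {X₁ : Matrix ι μ R} {X₂ : Matrix κ μ R} {Y : Matrix μ (ι ⊕ κ) R}
    (hYX : Y * fromRows X₁ X₂ = 1) (hX : X₁ᵀ * M * X₁ + π • (X₂ᵀ * N * X₂) = 0)
    (hN : ∀ x, x ⬝ᵥ N.map f *ᵥ x = 0 → x = 0) :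
    Function.Injective (X₁.map f).mulVecLin := by
  rw [injective_iff_map_eq_zero]
  intro g hg
  choose G hG using fun i => hf (g i)
  obtain rfl : f ∘ G = g := funext hG
  have hdvd (i) : π ∣ (X₁ *ᵥ G) i := by
    rw [← hker, RingHom.map_mulVec]
    exact congrFun hg i
  choose Z hZ using hdvd
  replace hZ : X₁ *ᵥ G = π • Z := funext hZ
  have hself : π * ((Z ⬝ᵥ M *ᵥ Z) * π + (X₂ *ᵥ G) ⬝ᵥ N *ᵥ (X₂ *ᵥ G)) = 0 := by
    have := congrArg (fun B => G ⬝ᵥ B *ᵥ G) hX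
    simp only [add_mulVec, dotProduct_add, smul_mulVec, dotProduct_smul,
      ← mulVec_dotProduct_mulVec_mulVec, hZ, mulVec_smul, smul_dotProduct, zero_mulVec,
      dotProduct_zero, smul_eq_mul] at this
    linear_combination this
  have hX₂ : f ∘ (X₂ *ᵥ G) = 0 := by
    apply hN
    have := congrArg f ((mul_eq_zero.mp hself).resolve_left hπ)
    rw [map_add, map_mul, (hker π).mpr dvd_rfl, mul_zero, zero_add, map_zero,
      RingHom.map_dotProduct] at this
    rwa [show f ∘ (N *ᵥ (X₂ *ᵥ G)) = N.map f *ᵥ (f ∘ (X₂ *ᵥ G)) from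
      funext (RingHom.map_mulVec f N _)] at this
  have hX₁ : f ∘ (X₁ *ᵥ G) = 0 := funext fun i => by
    rw [hZ]
    simp [(hker π).mpr dvd_rfl]
  calc f ∘ G = f ∘ ((Y * fromRows X₁ X₂) *ᵥ G) := by rw [hYX, one_mulVec]
    _ = (Y.map f) *ᵥ (f ∘ Sum.elim (X₁ *ᵥ G) (X₂ *ᵥ G)) := by
        rw [← mulVec_mulVec, fromRows_mulVec]
        exact funext (RingHom.map_mulVec f Y _)
    _ = 0 := by rw [Sum.comp_elim, hX₁, hX₂, Sum.elim_zero_zero, mulVec_zero]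

/-- Modulo `π`, the projection to `ι → F` of a lattice exhibiting the form as metabolic is still
injective by anisotropy of `N`, and it is totally isotropic for `M`, so it is too small if
`κ` is nonempty. -/
theorem IsMetabolic.isEmpty_of_anisotropic [DecidableEq ι] (hf : Function.Surjective f)
    (hπ : π ≠ 0) (hker : ∀ r, f r = 0 ↔ π ∣ r) (hM : (M.map f).det ≠ 0)
    (hN : ∀ x, x ⬝ᵥ N.map f *ᵥ x = 0 → x = 0)
    (h : IsMetabolic (fromBlocks M 0 0 (π • N))) : IsEmpty κ := by
  obtain ⟨d, X, Y, hYX, hX, hd⟩ := h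
  obtain ⟨X₁, X₂, rfl⟩ : ∃ X₁ X₂, X = fromRows X₁ X₂ := ⟨_, _, (fromRows_toRows X).symm⟩
  replace hX : X₁ᵀ * M * X₁ + π • (X₂ᵀ * N * X₂) = 0 := by
    simpa [transpose_fromRows, fromCols_mul_fromBlocks, fromCols_mul_fromRows] using hX
  have hinj := mulVecLin_map_injective_of_anisotropic hf hπ hker hYX hX hN
  have hle := finrank_add_finrank_le_of_dotProduct_mulVec_eq_zero hM
    (U := LinearMap.range (X₁.map f).mulVecLin) (V := LinearMap.range (X₁.map f).mulVecLin) <| by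
      rintro _ ⟨u, rfl⟩ _ ⟨v, rfl⟩
      have hX₁ : (X₁.map f)ᵀ * M.map f * X₁.map f = 0 := by
        have := congrArg (fun B : Matrix (Fin d) (Fin d) R => B.map f) hX
        rw [← transpose_map, ← Matrix.map_mul, ← Matrix.map_mul]
        ext i j
        simpa [(hker π).mpr dvd_rfl] using congrFun₂ this i j
      rw [mulVecLin_apply, mulVecLin_apply, mulVec_dotProduct_mulVec_mulVec, hX₁, zero_mulVec,
        dotProduct_zero]
  rw [LinearMap.finrank_range_of_inj hinj, finrank_fin_fun] at hle
  rw [Fintype.card_sum] at hd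
  rw [← Fintype.card_eq_zero_iff]
  lia

end Residue

section FreeAbelianGroup

theorem exists_equiv_of_sum_freeAbelianGroup_of_eq {α ι κ : Type*} [Fintype ι] [Fintype κ]
    {a : ι → α} {b : κ → α} (h : ∑ i, FreeAbelianGroup.of (a i) = ∑ j, FreeAbelianGroup.of (b j)) :
    ∃ e : ι ≃ κ, ∀ i, b (e i) = a i := by
  classical
  have hcard (c : α) : Fintype.card {i // a i = c} = Fintype.card {j // b j = c} := by
    have := congrArg (FreeAbelianGroup.lift fun x => if x = c then (1 : ℤ) else 0) h
    simpa [Fintype.card_subtype] using this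
  let e (c : α) : {i // a i = c} ≃ {j // b j = c} := Fintype.equivOfCardEq (hcard c)
  exact ⟨Equiv.ofFiberEquiv e, Equiv.ofFiberEquiv_map e⟩

end FreeAbelianGroup

section WittGroup

variable (K : Type*) [Field K]

/-- The subgroup of the free abelian group on the unary forms `⟨a⟩`, `a ∈ Kˣ`, generated by the
orthogonal sums `⟨a₁⟩ + ⋯ + ⟨aₙ⟩` that are metabolic. -/
def metabolicSubgroup : AddSubgroup (FreeAbelianGroup Kˣ) :=
  AddSubgroup.closure {x | ∃ (n : ℕ) (a : Fin n → Kˣ),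
    IsMetabolic (diagonal fun i => (a i : K)) ∧ ∑ i, FreeAbelianGroup.of (a i) = x}

/-- The Witt group of a field of characteristic different from `2`: since every symmetric form is
then diagonalizable, it is generated by the unary forms. -/
def WittGroup : Type _ := FreeAbelianGroup Kˣ ⧸ metabolicSubgroup K

instance : AddCommGroup (WittGroup K) :=
  inferInstanceAs (AddCommGroup (FreeAbelianGroup Kˣ ⧸ metabolicSubgroup K))

variable {K} {ι κ : Type*} [Fintype ι] [Fintype κ]

theorem IsMetabolic.diagonal_append {m n : ℕ} {a : Fin m → Kˣ} {b : Fin n → Kˣ}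
    (ha : IsMetabolic (diagonal fun i => (a i : K)))
    (hb : IsMetabolic (diagonal fun i => (b i : K))) :
    IsMetabolic (diagonal fun i => ((Fin.append a b i : Kˣ) : K)) := by
  have := (ha.fromBlocks_diag hb).submatrix finSumFinEquiv.symm
  rw [fromBlocks_diagonal, submatrix_diagonal_equiv] at this
  convert! this with i
  induction i using Fin.addCases <;> simp

theorem exists_isMetabolic_add_eq_of_mem_metabolicSubgroup {x : FreeAbelianGroup Kˣ}
    (hx : x ∈ metabolicSubgroup K) : ∃ (m n : ℕ) (a : Fin m → Kˣ) (b : Fin n → Kˣ),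
      IsMetabolic (diagonal fun i => (a i : K)) ∧ IsMetabolic (diagonal fun i => (b i : K)) ∧
      x + ∑ i, FreeAbelianGroup.of (a i) = ∑ i, FreeAbelianGroup.of (b i) := by
  have hempty : IsMetabolic (diagonal fun i => ((Fin.elim0 i : Kˣ) : K)) :=
    ⟨0, 0, 0, Subsingleton.elim _ _, Subsingleton.elim _ _, by simp⟩
  induction hx using AddSubgroup.closure_induction with
  | mem x hx =>
    obtain ⟨n, b, hb, rfl⟩ := hx
    exact ⟨0, n, Fin.elim0, b, hempty, hb, by simp⟩
  | zero => exact ⟨0, 0, Fin.elim0, Fin.elim0, hempty, hempty, by simp⟩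
  | add x y _ _ hx hy =>
    obtain ⟨_, _, a, b, ha, hb, hx⟩ := hx
    obtain ⟨_, _, c, d, hc, hd, hy⟩ := hy
    refine ⟨_, _, Fin.append a c, Fin.append b d, ha.diagonal_append hc, hb.diagonal_append hd, ?_⟩
    simp only [Fin.sum_univ_add, Fin.append_left, Fin.append_right, ← hx, ← hy]
    abel
  | neg x _ hx =>
    obtain ⟨_, _, a, b, ha, hb, hx⟩ := hx
    exact ⟨_, _, b, a, hb, ha, by rw [← hx, neg_add_cancel_left]⟩

theorem sum_of_mem_metabolicSubgroup_iff [DecidableEq ι] {a : ι → Kˣ} :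
    ∑ i, FreeAbelianGroup.of (a i) ∈ metabolicSubgroup K ↔
      IsMetabolic (diagonal fun i => (a i : K)) := by
  constructor
  · intro h
    obtain ⟨_, _, b, c, hb, hc, habc⟩ := exists_isMetabolic_add_eq_of_mem_metabolicSubgroup h
    obtain ⟨e, he⟩ : ∃ e : _ ≃ _, ∀ i, c (e i) = Sum.elim a b i := by
      apply exists_equiv_of_sum_freeAbelianGroup_of_eq
      simpa using habc
    refine IsMetabolic.of_fromBlocks_diag ?_ hb (by simp [det_diagonal, Finset.prod_eq_zero_iff])
    have := hc.submatrix e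
    rw [submatrix_diagonal_equiv] at this
    rw [fromBlocks_diagonal]
    convert! this
    ext i
    rw [Function.comp_apply, he]
    cases i <;> rfl
  · intro h
    let e := (Fintype.equivFin ι).symm
    refine AddSubgroup.subset_closure ⟨Fintype.card ι, a ∘ e, ?_, ?_⟩
    · have := h.submatrix e
      rwa [submatrix_diagonal_equiv] at this
    · exact e.sum_comp fun i => FreeAbelianGroup.of (a i)

namespace WittGroup

/-- The Witt class of a formal sum of unary forms. -/
def mk : FreeAbelianGroup Kˣ →+ WittGroup K :=
  QuotientAddGroup.mk' (metabolicSubgroup K)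

theorem mk_surjective : Function.Surjective (mk : FreeAbelianGroup Kˣ → WittGroup K) :=
  QuotientAddGroup.mk'_surjective _

theorem mk_eq_zero_iff {x : FreeAbelianGroup Kˣ} : mk x = 0 ↔ x ∈ metabolicSubgroup K :=
  QuotientAddGroup.eq_zero_iff x

/-- The Witt class of the unary form `a x²`; by convention it is `0` for `a = 0`. -/
noncomputable def unary (a : K) : WittGroup K :=
  open scoped Classical in
  if h : a = 0 then 0 else mk (FreeAbelianGroup.of (Units.mk0 a h))

theorem unary_of_ne_zero {a : K} (ha : a ≠ 0) :
    unary a = mk (FreeAbelianGroup.of (Units.mk0 a ha)) :=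
  dif_neg ha

theorem sum_unary_eq_zero_iff [DecidableEq ι] {a : ι → K} (ha : ∀ i, a i ≠ 0) :
    ∑ i, unary (a i) = 0 ↔ IsMetabolic (diagonal a) := by
  simp only [unary_of_ne_zero (ha _), ← map_sum, mk_eq_zero_iff,
    sum_of_mem_metabolicSubgroup_iff, Units.val_mk0]

theorem unary_neg (a : K) : unary (-a) = -unary a := by
  obtain rfl | ha := eq_or_ne a 0
  · simp [unary]
  have hsum := (sum_unary_eq_zero_iff (a := Sum.elim (fun _ : Unit => a) fun _ : Unit => -a)
    (by rintro (_ | _) <;> simpa)).mpr <| by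
      rw [← fromBlocks_diagonal, ← diagonal_neg]
      simpa using isMetabolic_fromBlocks_neg_congr (diagonal fun _ : Unit => a) 1 le_rfl
  rw [eq_neg_iff_add_eq_zero, add_comm]
  simpa using hsum

theorem sum_unary_eq_sum_unary_iff [DecidableEq ι] [DecidableEq κ] {a : ι → K} {b : κ → K}
    (ha : ∀ i, a i ≠ 0) (hb : ∀ j, b j ≠ 0) :
    ∑ i, unary (a i) = ∑ j, unary (b j) ↔
      IsMetabolic (fromBlocks (diagonal a) 0 0 (-diagonal b)) := by
  have h := sum_unary_eq_zero_iff (a := Sum.elim a (-b)) <| by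
    rintro (i | j)
    exacts [ha i, neg_ne_zero.mpr (hb j)]
  simp only [Fintype.sum_sum_type, Sum.elim_inl, Sum.elim_inr, Pi.neg_apply, unary_neg,
    Finset.sum_neg_distrib, ← sub_eq_add_neg, sub_eq_zero] at h
  rw [h, ← fromBlocks_diagonal, diagonal_neg]
  rfl

theorem sum_unary_eq_of_congr [DecidableEq ι] [DecidableEq κ] {a : ι → K} {b : κ → K}
    (ha : ∀ i, a i ≠ 0) (hb : ∀ j, b j ≠ 0) (P : Matrix ι κ K)
    (hcard : Fintype.card ι ≤ Fintype.card κ) (hP : Pᵀ * diagonal a * P = diagonal b) :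
    ∑ i, unary (a i) = ∑ j, unary (b j) := by
  rw [sum_unary_eq_sum_unary_iff ha hb, ← hP]
  exact isMetabolic_fromBlocks_neg_congr _ P hcard

theorem unary_mul_sq (a : K) {b : K} (hb : b ≠ 0) : unary (a * b ^ 2) = unary a := by
  obtain rfl | ha := eq_or_ne a 0
  · rw [zero_mul]
  have h := sum_unary_eq_of_congr (a := fun _ : Unit => a) (b := fun _ : Unit => a * b ^ 2)
    (fun _ => ha) (fun _ => mul_ne_zero ha (pow_ne_zero 2 hb)) (diagonal fun _ => b) le_rfl <| by
      rw [diagonal_transpose, diagonal_mul_diagonal, diagonal_mul_diagonal]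
      congr! 2
      ring
  simpa using h.symm

theorem unary_add_unary {a b : K} (ha : a ≠ 0) (hb : b ≠ 0) (hab : a + b ≠ 0) :
    unary a + unary b = unary (a + b) + unary (a * b * (a + b)) := by
  have h := sum_unary_eq_of_congr (a := ![a, b]) (b := ![a + b, a * b * (a + b)])
    (by simp [Fin.forall_fin_two, ha, hb]) (by simp [Fin.forall_fin_two, ha, hb, hab])
    !![1, b; 1, -a] le_rfl <| by
      ext i j
      fin_cases i <;> fin_cases j <;> simp [Matrix.mul_apply, Fin.sum_univ_two] <;> ring
  simpa [Fin.sum_univ_two] using h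

end WittGroup

theorem exists_congr_diagonal [NeZero (2 : K)] [DecidableEq ι] {A : Matrix ι ι K}
    (hA : A.IsSymm) : ∃ (P Q : Matrix ι ι K) (a : ι → K), P * Q = 1 ∧ Pᵀ * A * P = diagonal a := by
  have : Invertible (2 : K) := invertibleOfNonzero two_ne_zero
  obtain ⟨v, hv⟩ := LinearMap.BilinForm.exists_orthogonal_basis
    (LinearMap.BilinForm.isSymm_iff.mp (isSymm_toBilin'_iff_isSymm.mpr hA))
  let w : Basis ι K (ι → K) := v.reindex (Fintype.equivOfCardEq (by simp))
  refine ⟨(Pi.basisFun K ι).toMatrix w, w.toMatrix (Pi.basisFun K ι),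
    fun i => Matrix.toBilin' A (w i) (w i), Basis.toMatrix_mul_toMatrix_flip _ _, ?_⟩
  have hA' : LinearMap.BilinForm.toMatrix (Pi.basisFun K ι) (Matrix.toBilin' A) = A := by
    simp [LinearMap.BilinForm.toMatrix_basisFun]
  rw [← hA', LinearMap.BilinForm.toMatrix_mul_basis_toMatrix, hA']
  ext i j
  rw [LinearMap.BilinForm.toMatrix_apply, diagonal_apply]
  split_ifs with hij
  · rw [hij]
  · simpa only [w, Basis.reindex_apply] using hv ((Equiv.injective _).ne hij)

namespace WittGroup

/-- The Witt class of a nonsingular symmetric matrix, read off from a diagonalization of it; by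
convention it is `0` if there is none. -/
noncomputable def ofMatrix [DecidableEq ι] (A : Matrix ι ι K) : WittGroup K :=
  open scoped Classical in
  if h : ∃ a : ι → K, (∀ i, a i ≠ 0) ∧ ∃ P Q : Matrix ι ι K, P * Q = 1 ∧ Pᵀ * A * P = diagonal a
  then ∑ i, unary (h.choose i) else 0

theorem ofMatrix_eq_sum_unary_iff [NeZero (2 : K)] [DecidableEq ι] [DecidableEq κ]
    {A : Matrix ι ι K} (hA : A.IsSymm) (hdet : A.det ≠ 0) {b : κ → K} (hb : ∀ j, b j ≠ 0) :
    ofMatrix A = ∑ j, unary (b j) ↔ IsMetabolic (fromBlocks A 0 0 (-diagonal b)) := by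
  have h : ∃ a : ι → K, (∀ i, a i ≠ 0) ∧
      ∃ P Q : Matrix ι ι K, P * Q = 1 ∧ Pᵀ * A * P = diagonal a := by
    obtain ⟨P, Q, a, hPQ, hP⟩ := exists_congr_diagonal hA
    refine ⟨a, ?_, P, Q, hPQ, hP⟩
    have := congrArg det hP
    rw [det_mul, det_mul, det_transpose, det_diagonal] at this
    have hPdet : P.det ≠ 0 := (isUnit_det_of_right_inverse hPQ).ne_zero
    exact fun i => Finset.prod_ne_zero_iff.mp (this ▸ by positivity) i (mem_univ i)
  obtain ⟨ha, P, Q, hPQ, hP⟩ := h.choose_spec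
  have hblocks : fromBlocks P 0 0 1 * fromBlocks Q 0 0 (1 : Matrix κ κ K) = 1 := by
    simp [fromBlocks_multiply, hPQ]
  rw [ofMatrix, dif_pos h, sum_unary_eq_sum_unary_iff ha hb, ← hP,
    ← isMetabolic_congr_iff (M := fromBlocks A 0 0 (-diagonal b)) hblocks]
  simp [fromBlocks_transpose, fromBlocks_multiply]

end WittGroup

end WittGroup

section WittMap

/-- A function on the units of a field satisfying the relations that hold between unary forms in
the Witt group. -/
structure IsWittMap {F G : Type*} [Field F] [AddCommGroup G] (ψ : Fˣ → G) : Prop where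
  map_mul_sq (a b : Fˣ) : ψ (a * b ^ 2) = ψ a
  map_neg (a : Fˣ) : ψ (-a) = -ψ a
  map_add_map {a b c : Fˣ} (h : (a : F) + b = c) : ψ a + ψ b = ψ c + ψ (a * b * c)

theorem exists_fin_sum_eq_of_mem_closure_image {α G : Type*} [AddCommGroup G] {f : α → G}
    {s : Set α} (hneg : ∀ a ∈ s, ∃ b ∈ s, f b = -f a) {x : G}
    (hx : x ∈ AddSubgroup.closure (f '' s)) :
    ∃ (n : ℕ) (a : Fin n → α), (∀ i, a i ∈ s) ∧ ∑ i, f (a i) = x := by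
  induction hx using AddSubgroup.closure_induction with
  | mem x hx =>
    obtain ⟨a, ha, rfl⟩ := hx
    exact ⟨1, fun _ => a, fun _ => ha, by simp⟩
  | zero => exact ⟨0, Fin.elim0, fun i => i.elim0, by simp⟩
  | add x y _ _ hx hy =>
    obtain ⟨m, a, ha, rfl⟩ := hx
    obtain ⟨n, b, hb, rfl⟩ := hy
    refine ⟨m + n, Fin.append a b, fun i => ?_, by simp [Fin.sum_univ_add]⟩
    induction i using Fin.addCases with
    | left i => simpa using ha i
    | right i => simpa using hb i
  | neg x _ hx =>
    obtain ⟨n, a, ha, rfl⟩ := hx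
    choose b hb hba using fun i => hneg (a i) (ha i)
    exact ⟨n, b, hb, by simp [hba]⟩

theorem exists_fin_sum_eq_multiset_sum_map {α G : Type*} [AddCommMonoid G] (f : α → G)
    (s : Multiset α) : ∃ a : Fin s.card → α, ∑ i, f (a i) = (s.map f).sum := by
  induction s using Quotient.inductionOn with
  | h l => exact ⟨l.get, Fin.sum_univ_fun_getElem l f⟩

namespace IsWittMap

variable {F G ι : Type*} [Field F] [AddCommGroup G] {ψ : Fˣ → G}

theorem exists_card_lt_of_sum_eq_zero (hψ : IsWittMap ψ) (s : Multiset Fˣ) (hs : s ≠ 0)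
    (hsum : (s.map Units.val).sum = 0) :
    ∃ t : Multiset Fˣ, t.card < s.card ∧ (t.map ψ).sum = (s.map ψ).sum := by
  induction hn : s.card generalizing s with
  | zero => exact absurd (Multiset.card_eq_zero.mp hn) hs
  | succ n ih =>
    obtain ⟨a, ha⟩ := Multiset.exists_mem_of_ne_zero hs
    obtain ⟨s, rfl⟩ := Multiset.exists_cons_of_mem ha
    have hs' : s ≠ 0 := by
      rintro rfl
      simp at hsum
    obtain ⟨b, hb⟩ := Multiset.exists_mem_of_ne_zero hs'
    obtain ⟨s, rfl⟩ := Multiset.exists_cons_of_mem hb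
    simp only [Multiset.card_cons, Multiset.map_cons, Multiset.sum_cons] at hn hsum ⊢
    by_cases hab : (a : F) + b = 0
    · obtain rfl : b = -a := Units.ext (by simpa [add_comm] using eq_neg_of_add_eq_zero_right hab)
      exact ⟨s, by lia, by rw [hψ.map_neg, add_neg_cancel_left]⟩
    · let c := Units.mk0 _ hab
      obtain ⟨t, ht, hts⟩ := ih (c ::ₘ s) (Multiset.cons_ne_zero)
        (by simpa [c, add_assoc] using hsum) (by simp only [Multiset.card_cons]; lia)
      refine ⟨(a * b * c) ::ₘ t, by simpa using ht, ?_⟩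
      rw [Multiset.map_cons, Multiset.sum_cons, hts, Multiset.map_cons, Multiset.sum_cons,
        ← add_assoc, ← add_assoc, hψ.map_add_map (c := c) rfl, add_comm (ψ c)]

theorem exists_card_lt_of_isotropic [Fintype ι] (hψ : IsWittMap ψ) (a : ι → Fˣ) {x : ι → F}
    (hx : x ≠ 0) (hax : ∑ i, (a i : F) * x i ^ 2 = 0) :
    ∃ t : Multiset Fˣ, t.card < Fintype.card ι ∧ (t.map ψ).sum = ∑ i, ψ (a i) := by
  classical
  let b (i : {i // x i ≠ 0}) : Fˣ := a i * Units.mk0 (x i) i.2 ^ 2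
  obtain ⟨t, ht, hts⟩ := hψ.exists_card_lt_of_sum_eq_zero (univ.val.map b)
    (by
      obtain ⟨i, hi⟩ := Function.ne_iff.mp hx
      have : Nonempty {i // x i ≠ 0} := ⟨⟨i, hi⟩⟩
      simpa using univ_nonempty.ne_empty)
    (by
      rw [Multiset.map_map]
      change ∑ i : {i // x i ≠ 0}, (a i : F) * x i ^ 2 = 0
      rw [← Finset.sum_subtype {i | x i ≠ 0} (by simp) fun i => (a i : F) * x i ^ 2]
      exact (Finset.sum_subset (by simp) (by simp +contextual)).trans hax)
  refine ⟨t + ({i | x i = 0} : Finset ι).val.map a, ?_, ?_⟩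
  · have := Finset.card_filter_add_card_filter_not (s := univ) fun i => x i = 0
    simp only [Multiset.card_map, Multiset.card_add, card_val, card_univ, Fintype.card_subtype]
      at ht this ⊢
    lia
  · have hb : ∑ i, ψ (b i) = ∑ i with x i ≠ 0, ψ (a i) := by
      simp only [b, hψ.map_mul_sq]
      exact (Finset.sum_subtype _ (by simp) fun i => ψ (a i)).symm
    rw [Multiset.map_add, Multiset.sum_add, hts, Multiset.map_map, Multiset.map_map,
      ← Finset.sum_filter_add_sum_filter_not univ fun i => x i = 0, add_comm]
    exact congrArg _ hb

/-- A representation as a sum with the least number of terms is anisotropic. -/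
theorem exists_anisotropic (hψ : IsWittMap ψ) {x : G} (hx : x ∈ AddSubgroup.closure (Set.range ψ)) :
    ∃ (n : ℕ) (a : Fin n → Fˣ), (∀ v : Fin n → F, ∑ i, (a i : F) * v i ^ 2 = 0 → v = 0) ∧
      ∑ i, ψ (a i) = x := by
  classical
  rw [← Set.image_univ] at hx
  have hex : ∃ (n : ℕ) (a : Fin n → Fˣ), ∑ i, ψ (a i) = x := by
    obtain ⟨n, a, -, ha⟩ := exists_fin_sum_eq_of_mem_closure_image
      (fun a _ => ⟨-a, Set.mem_univ _, hψ.map_neg a⟩) hx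
    exact ⟨n, a, ha⟩
  obtain ⟨a, ha⟩ := Nat.find_spec hex
  refine ⟨Nat.find hex, a, fun v hav => ?_, ha⟩
  by_contra hv
  obtain ⟨t, ht, hta⟩ := hψ.exists_card_lt_of_isotropic a hv hav
  obtain ⟨b, hb⟩ := exists_fin_sum_eq_multiset_sum_map ψ t
  exact Nat.find_min hex (by simpa using ht) ⟨b, by rw [hb, hta, ha]⟩

end IsWittMap

end WittMap

section SmoothFiltration

open WittGroup

/-- Nonzero integers all of whose prime factors are smaller than `p`. -/
def IsSmooth (p : ℕ) (u : ℤ) : Prop :=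
  u.natAbs ∈ p.smoothNumbers

namespace IsSmooth

variable {p : ℕ} {u v : ℤ}

theorem ne_zero (hu : IsSmooth p u) : u ≠ 0 :=
  Int.natAbs_ne_zero.mp (Nat.ne_zero_of_mem_smoothNumbers hu)

theorem mul (hu : IsSmooth p u) (hv : IsSmooth p v) : IsSmooth p (u * v) := by
  rw [IsSmooth, Int.natAbs_mul]
  exact Nat.mul_mem_smoothNumbers hu hv

theorem neg (hu : IsSmooth p u) : IsSmooth p (-u) := by
  rwa [IsSmooth, Int.natAbs_neg]

theorem of_natAbs_lt (hu : u ≠ 0) (hup : u.natAbs < p) : IsSmooth p u :=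
  Nat.mem_smoothNumbers_of_lt (Int.natAbs_pos.mpr hu) hup

theorem mono {q : ℕ} (hpq : p ≤ q) (hu : IsSmooth p u) : IsSmooth q u :=
  Nat.smoothNumbers_mono hpq hu

theorem intCast_ne_zero [Fact p.Prime] (hu : IsSmooth p u) : (u : ZMod p) ≠ 0 := by
  rw [Ne, ZMod.intCast_zmod_eq_zero_iff_dvd, Int.natCast_dvd]
  exact (Fact.out : p.Prime).coprime_iff_not_dvd.mp
    (Nat.Prime.smoothNumbers_coprime Fact.out hu)

end IsSmooth

/-- The subgroup of the Witt group of `ℚ` generated by the unary forms with `p`-smooth integral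
coefficient. These subgroups filter `WittGroup ℚ`. -/
def smoothSubgroup (p : ℕ) : AddSubgroup (WittGroup ℚ) :=
  AddSubgroup.closure ((fun u : ℤ => unary (u : ℚ)) '' {u | IsSmooth p u})

theorem unary_mem_smoothSubgroup {p : ℕ} {u : ℤ} (hu : IsSmooth p u) :
    unary (u : ℚ) ∈ smoothSubgroup p :=
  AddSubgroup.subset_closure ⟨u, hu, rfl⟩

theorem smoothSubgroup_mono {p q : ℕ} (hpq : p ≤ q) : smoothSubgroup p ≤ smoothSubgroup q :=
  AddSubgroup.closure_mono (Set.image_mono fun _ => IsSmooth.mono hpq)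

theorem exists_sum_unary_of_mem_smoothSubgroup {p : ℕ} {x : WittGroup ℚ}
    (hx : x ∈ smoothSubgroup p) :
    ∃ (n : ℕ) (u : Fin n → ℤ), (∀ i, IsSmooth p (u i)) ∧ ∑ i, unary (u i : ℚ) = x :=
  exists_fin_sum_eq_of_mem_closure_image (f := fun u : ℤ => unary (u : ℚ))
    (s := {u | IsSmooth p u}) (fun u hu => ⟨-u, IsSmooth.neg hu, by rw [Int.cast_neg, unary_neg]⟩)
    hx

theorem exists_unary_mem_smoothSubgroup {a : ℚ} (ha : a ≠ 0) :
    ∃ p, unary a ∈ smoothSubgroup p := by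
  have hden : (a.den : ℚ) ≠ 0 := by simp
  have hu : a.num * a.den ≠ 0 := by simpa
  refine ⟨(a.num * a.den).natAbs + 1, ?_⟩
  have := unary_mem_smoothSubgroup (IsSmooth.of_natAbs_lt hu (Nat.lt_succ_self _))
  rw [← unary_mul_sq _ (inv_ne_zero hden)] at this
  convert! this using 2
  conv_lhs => rw [← a.num_div_den]
  push_cast
  field_simp

theorem exists_mem_smoothSubgroup (x : WittGroup ℚ) : ∃ p, x ∈ smoothSubgroup p := by
  obtain ⟨x, rfl⟩ := mk_surjective x
  induction x using FreeAbelianGroup.induction_on with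
  | zero => exact ⟨0, zero_mem _⟩
  | of a => simpa only [unary_of_ne_zero a.ne_zero, Units.mk0_val] using
      exists_unary_mem_smoothSubgroup a.ne_zero
  | neg a h => simpa only [map_neg, neg_mem_iff] using h
  | add x y hx hy =>
    obtain ⟨p, hp⟩ := hx
    obtain ⟨q, hq⟩ := hy
    rw [map_add]
    exact ⟨max p q, add_mem (smoothSubgroup_mono (le_max_left p q) hp)
      (smoothSubgroup_mono (le_max_right p q) hq)⟩

/-- The class of the unary form `⟨p u⟩` modulo forms with `p`-smooth coefficients. -/
noncomputable def residueClass (p : ℕ) (u : ℤ) : WittGroup ℚ ⧸ smoothSubgroup p :=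
  QuotientAddGroup.mk' (smoothSubgroup p) (unary (p * u : ℚ))

section ResidueClass

variable {p : ℕ}

theorem mk'_unary_eq_zero {u : ℤ} (hu : IsSmooth p u) :
    QuotientAddGroup.mk' (smoothSubgroup p) (unary (u : ℚ)) = 0 :=
  (QuotientAddGroup.eq_zero_iff _).mpr (unary_mem_smoothSubgroup hu)

theorem residueClass_neg (u : ℤ) : residueClass p (-u) = -residueClass p u := by
  rw [residueClass, Int.cast_neg, mul_neg, unary_neg, map_neg, residueClass]

theorem residueClass_mul_sq (u : ℤ) {v : ℤ} (hv : v ≠ 0) :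
    residueClass p (u * v ^ 2) = residueClass p u := by
  rw [residueClass, Int.cast_mul, Int.cast_pow, ← mul_assoc, unary_mul_sq _ (by exact_mod_cast hv),
    residueClass]

variable [hp : Fact p.Prime]

theorem residueClass_add_residueClass {a b c : ℤ} (ha : a ≠ 0) (hb : b ≠ 0) (hc : c ≠ 0)
    (habc : a + b = c) :
    residueClass p a + residueClass p b = residueClass p c + residueClass p (a * b * c) := by
  have hp0 : (p : ℚ) ≠ 0 := by exact_mod_cast hp.out.ne_zero
  have hsum : (p * a + p * b : ℚ) = p * c := by
    rw [← mul_add, ← Int.cast_add, habc]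
  have hprod : (p * a * (p * b) * (p * c) : ℚ) = p * (a * b * c : ℤ) * p ^ 2 := by
    push_cast
    ring
  have h := unary_add_unary (a := (p * a : ℚ)) (b := p * b) (by simp [hp0, ha]) (by simp [hp0, hb])
    (by simp [hsum, hp0, hc])
  rw [hsum, hprod, unary_mul_sq _ hp0] at h
  simpa only [residueClass, map_add] using congrArg (QuotientAddGroup.mk' (smoothSubgroup p)) h

theorem residueClass_eq_of_eq_add_mul {a b l : ℤ} (ha : IsSmooth p a) (hb : IsSmooth p b)
    (hl : IsSmooth p l) (habl : a = b + p * l) : residueClass p a = residueClass p b := by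
  have hp0 : (p : ℚ) ≠ 0 := by exact_mod_cast hp.out.ne_zero
  have hsum : (p * b + l * p ^ 2 : ℚ) = p * a := by
    rw [habl]
    push_cast
    ring
  have hprod : (p * b * (l * p ^ 2) * (p * a) : ℚ) = (b * l * a : ℤ) * (p ^ 2) ^ 2 := by
    push_cast
    ring
  have h := unary_add_unary (a := (p * b : ℚ)) (b := l * p ^ 2) (by simp [hp0, hb.ne_zero])
    (by simp [hp0, hl.ne_zero]) (by simp [hsum, hp0, ha.ne_zero])
  rw [hsum, hprod, unary_mul_sq _ hp0, unary_mul_sq _ (pow_ne_zero 2 hp0)] at h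
  simpa only [residueClass, map_add, mk'_unary_eq_zero hl,
    mk'_unary_eq_zero ((hb.mul hl).mul ha), add_zero] using
    (congrArg (QuotientAddGroup.mk' (smoothSubgroup p)) h).symm

theorem residueClass_mul_mod {m n : ℕ} (hm : 0 < m) (hmp : m < p) (hn : 0 < n) (hnp : n < p)
    {v : ℤ} (hv : IsSmooth p v) :
    residueClass p (m * n * v) = residueClass p ((m * n % p : ℕ) * v) := by
  have hsmooth {k : ℕ} (hk : k ≠ 0) (hkp : k < p) : IsSmooth p (k * v) :=
    .mul (.of_natAbs_lt (by exact_mod_cast hk) (by simpa)) hv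
  have hmod : m * n % p ≠ 0 := by
    rw [Ne, ← Nat.dvd_iff_mod_eq_zero, hp.out.dvd_mul]
    exact not_or.mpr ⟨Nat.not_dvd_of_pos_of_lt hm hmp, Nat.not_dvd_of_pos_of_lt hn hnp⟩
  have hdiv := Nat.mod_add_div (m * n) p
  obtain hl | hl := eq_or_ne (m * n / p) 0
  · rw [hl, mul_zero, add_zero] at hdiv
    rw [hdiv, Nat.cast_mul]
  · refine residueClass_eq_of_eq_add_mul (l := (m * n / p : ℕ) * v) ?_
      (hsmooth hmod (Nat.mod_lt _ hp.out.pos))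
      (hsmooth hl (Nat.div_lt_of_lt_mul (Nat.mul_lt_mul'' hmp hnp))) ?_
    · rw [mul_assoc]
      exact .mul (.of_natAbs_lt (by lia) (by simpa)) (hsmooth hn.ne' hnp)
    · rw [← mul_assoc, ← add_mul]
      exact_mod_cast congrArg (· * v) (congrArg Nat.cast hdiv.symm)

theorem mod_pos_of_mem_smoothNumbers {n : ℕ} (hn : n ∈ p.smoothNumbers) : 0 < n % p :=
  Nat.pos_of_ne_zero fun h => hp.out.coprime_iff_not_dvd.mp
    (Nat.Prime.smoothNumbers_coprime hp.out hn) (Nat.dvd_of_mod_eq_zero h)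

theorem residueClass_natCast_mul {n : ℕ} (hn : n ∈ p.smoothNumbers) {v : ℤ} (hv : IsSmooth p v) :
    residueClass p (n * v) = residueClass p ((n % p : ℕ) * v) := by
  induction n using induction_on_primes generalizing v with
  | zero => exact absurd rfl (Nat.ne_zero_of_mem_smoothNumbers hn)
  | one => rw [Nat.mod_eq_of_lt hp.out.one_lt]
  | prime_mul q n hq ih =>
    have hqp : q < p := Nat.mem_smoothNumbers'.mp hn q hq (dvd_mul_right q n)
    have hns : n ∈ p.smoothNumbers := Nat.mem_smoothNumbers_of_dvd hn (dvd_mul_left n q)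
    have hqv : IsSmooth p (q * v) :=
      .mul (.of_natAbs_lt (by exact_mod_cast hq.ne_zero) (by simpa)) hv
    calc residueClass p ((q * n : ℕ) * v) = residueClass p (n * (q * v)) := by
          rw [Nat.cast_mul, mul_assoc, mul_left_comm]
      _ = residueClass p (q * (n % p : ℕ) * v) := by rw [ih hns hqv, mul_left_comm, mul_assoc]
      _ = residueClass p ((q * (n % p) % p : ℕ) * v) :=
          residueClass_mul_mod hq.pos hqp (mod_pos_of_mem_smoothNumbers hns)
            (Nat.mod_lt _ hp.out.pos) hv
      _ = residueClass p ((q * n % p : ℕ) * v) := by rw [Nat.mul_mod_mod]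

theorem residueClass_eq_of_intCast_eq {u : ℤ} (hu : IsSmooth p u) {a : (ZMod p)ˣ}
    (hua : (u : ZMod p) = a) : residueClass p u = residueClass p (a : ZMod p).val := by
  have hone : IsSmooth p 1 := .of_natAbs_lt one_ne_zero hp.out.one_lt
  obtain ⟨n, rfl | rfl⟩ := u.eq_nat_or_neg
  · have hn : n ∈ p.smoothNumbers := by simpa [IsSmooth] using hu
    rw [Int.cast_natCast] at hua
    simpa [← hua] using residueClass_natCast_mul hn hone
  · have hn : n ∈ p.smoothNumbers := by simpa [IsSmooth] using hu
    have hmod : residueClass p (-n) = residueClass p (-(n % p : ℕ)) := by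
      simpa only [residueClass_neg, mul_one] using
        congrArg Neg.neg (residueClass_natCast_mul hn hone)
    have hlt := Nat.mod_lt n hp.out.pos
    have hpos := mod_pos_of_mem_smoothNumbers hn
    have hval : (a : ZMod p).val = p - n % p := by
      rw [← hua, Int.cast_neg, Int.cast_natCast, ← ZMod.natCast_mod, ← ZMod.val_cast_of_lt (n := p)
        (a := p - n % p) (by lia), Nat.cast_sub hlt.le, ZMod.natCast_self, zero_sub]
    rw [hmod, hval]
    refine residueClass_eq_of_eq_add_mul (l := -1) ?_ ?_ hone.neg ?_
    · exact .of_natAbs_lt (by lia) (by lia)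
    · exact .of_natAbs_lt (by lia) (by lia)
    · lia

theorem isSmooth_val (a : (ZMod p)ˣ) : IsSmooth p ((a : ZMod p).val : ℕ) :=
  .of_natAbs_lt (by exact_mod_cast (ZMod.val_ne_zero _).mpr a.ne_zero)
    (by simpa only [Int.natAbs_natCast] using ZMod.val_lt _)

theorem isWittMap_residueClass :
    IsWittMap fun a : (ZMod p)ˣ => residueClass p (a : ZMod p).val where
  map_mul_sq a b := by
    rw [← residueClass_mul_sq (p := p) (a : ZMod p).val (isSmooth_val b).ne_zero]
    refine (residueClass_eq_of_intCast_eq ?_ ?_).symm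
    · exact (isSmooth_val a).mul (pow_two (_ : ℤ) ▸ (isSmooth_val b).mul (isSmooth_val b))
    · simp
  map_neg a := by
    rw [← residueClass_neg]
    exact (residueClass_eq_of_intCast_eq (isSmooth_val a).neg (by simp)).symm
  map_add_map {a b c} habc := by
    obtain ⟨b', hb', hbb', hab'⟩ : ∃ b' : ℤ, IsSmooth p b' ∧ (b' : ZMod p) = b ∧
        ((a : ZMod p).val + b').natAbs < p := by
      have ha := (a : ZMod p).val_lt
      have hb := (b : ZMod p).val_lt
      have hb0 := (isSmooth_val b).ne_zero
      by_cases hab : (a : ZMod p).val + (b : ZMod p).val < p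
      · exact ⟨(b : ZMod p).val, isSmooth_val b, by simp, by lia⟩
      · exact ⟨(b : ZMod p).val - p, .of_natAbs_lt (by lia) (by lia), by simp, by lia⟩
    have hc : (((a : ZMod p).val + b' : ℤ) : ZMod p) = c := by simp [hbb', habc]
    have hc0 : ((a : ZMod p).val + b' : ℤ) ≠ 0 := fun h =>
      c.ne_zero (by rw [← hc, h, Int.cast_zero])
    have hc' := IsSmooth.of_natAbs_lt hc0 hab'
    have h := residueClass_add_residueClass (p := p) (isSmooth_val a).ne_zero hb'.ne_zero hc0 rfl
    rwa [residueClass_eq_of_intCast_eq hb' hbb', residueClass_eq_of_intCast_eq hc' hc,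
      residueClass_eq_of_intCast_eq (a := a * b * c) (((isSmooth_val a).mul hb').mul hc')
        (by simp [hbb', ← hc])] at h

theorem IsSmooth.exists_eq_pow_mul {u : ℤ} (hu : IsSmooth (p + 1) u) :
    ∃ (e : ℕ) (w : ℤ), IsSmooth p w ∧ u = p ^ e * w := by
  obtain ⟨⟨e, w, hw⟩, hew⟩ := (Nat.equivProdNatSmoothNumbers hp.out).surjective ⟨_, hu⟩
  have huw : u.natAbs = p ^ e * w := by simpa using (congrArg Subtype.val hew).symm
  obtain h | h := u.natAbs_eq
  · exact ⟨e, w, by simpa [IsSmooth] using hw, by rw [h, huw]; push_cast; rfl⟩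
  · exact ⟨e, -w, by simpa [IsSmooth] using hw, by rw [h, huw]; push_cast; ring⟩

theorem mk_mem_closure_range_residueClass {x : WittGroup ℚ} (hx : x ∈ smoothSubgroup (p + 1)) :
    QuotientAddGroup.mk' (smoothSubgroup p) x ∈
      AddSubgroup.closure (Set.range fun a : (ZMod p)ˣ => residueClass p (a : ZMod p).val) := by
  have hp0 : (p : ℚ) ≠ 0 := by exact_mod_cast hp.out.ne_zero
  rw [← AddSubgroup.mem_comap]
  refine (AddSubgroup.closure_le _).mpr ?_ hx
  rintro _ ⟨u, hu, rfl⟩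
  obtain ⟨e, w, hw, rfl⟩ := IsSmooth.exists_eq_pow_mul hu
  rw [SetLike.mem_coe, AddSubgroup.mem_comap]
  obtain ⟨k, rfl | rfl⟩ := e.even_or_odd'
  · change QuotientAddGroup.mk' (smoothSubgroup p) (unary ((p ^ (2 * k) * w : ℤ) : ℚ)) ∈ _
    have h : ((p ^ (2 * k) * w : ℤ) : ℚ) = w * (p ^ k) ^ 2 := by
      push_cast
      ring
    rw [h, unary_mul_sq _ (pow_ne_zero k hp0), mk'_unary_eq_zero hw]
    exact zero_mem _
  · change QuotientAddGroup.mk' (smoothSubgroup p) (unary ((p ^ (2 * k + 1) * w : ℤ) : ℚ)) ∈ _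
    have h : ((p ^ (2 * k + 1) * w : ℤ) : ℚ) = p * w * (p ^ k) ^ 2 := by
      push_cast
      ring
    rw [h, unary_mul_sq _ (pow_ne_zero k hp0)]
    refine AddSubgroup.subset_closure ⟨Units.mk0 (w : ZMod p) hw.intCast_ne_zero, ?_⟩
    exact (residueClass_eq_of_intCast_eq hw rfl).symm

theorem exists_eq_sum_unary_add_sum_unary {x : WittGroup ℚ} (hx : x ∈ smoothSubgroup (p + 1)) :
    ∃ (m n : ℕ) (u : Fin m → ℤ) (r : Fin n → (ZMod p)ˣ), (∀ i, IsSmooth p (u i)) ∧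
      (∀ v : Fin n → ZMod p, ∑ j, (r j : ZMod p) * v j ^ 2 = 0 → v = 0) ∧
      x = ∑ i, unary (u i : ℚ) + ∑ j, unary (p * ((r j : ZMod p).val : ℤ) : ℚ) := by
  obtain ⟨n, r, hr, hrx⟩ :=
    isWittMap_residueClass.exists_anisotropic (mk_mem_closure_range_residueClass hx)
  simp only [residueClass, ← map_sum] at hrx
  obtain ⟨m, u, hu, hux⟩ := exists_sum_unary_of_mem_smoothSubgroup
    ((QuotientAddGroup.eq (s := smoothSubgroup p)).mp hrx)
  exact ⟨m, n, u, r, hu, hr, by rw [hux, neg_add_cancel_comm]⟩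

end ResidueClass

theorem smoothSubgroup_succ {p : ℕ} (hp : ¬p.Prime) :
    smoothSubgroup (p + 1) = smoothSubgroup p := by
  simp only [smoothSubgroup, IsSmooth, Nat.smoothNumbers_succ hp]

end SmoothFiltration

section Descent

open WittGroup

theorem fromBlocks_neg_diagonal_map {R S ι κ : Type*} [CommRing R] [CommRing S] [DecidableEq κ]
    (f : R →+* S) (A : Matrix ι ι R) (b : κ → R) :
    (fromBlocks A 0 0 (-diagonal b)).map f =
      fromBlocks (A.map f) 0 0 (-diagonal fun j => f (b j)) := by
  simp [fromBlocks_map, diagonal_neg, diagonal_map]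

variable {ι κ : Type*} [Fintype ι] [Fintype κ] [DecidableEq ι] [DecidableEq κ] {A : Matrix ι ι ℤ}

theorem ofMatrix_map_eq_sum_unary_iff (hA : A.IsSymm) (hdet : IsUnit A.det) {b : κ → ℤ}
    (hb : ∀ j, b j ≠ 0) :
    ofMatrix (A.map (algebraMap ℤ ℚ)) = ∑ j, unary (b j : ℚ) ↔
      IsMetabolic (fromBlocks A 0 0 (-diagonal b)) := by
  have hdet' : (A.map (algebraMap ℤ ℚ)).det ≠ 0 := by
    have := (hdet.map (algebraMap ℤ ℚ)).ne_zero
    rwa [RingHom.map_det] at this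
  have hmap := fromBlocks_neg_diagonal_map (algebraMap ℤ ℚ) A b
  rw [ofMatrix_eq_sum_unary_iff (hA.map _) hdet' (by exact_mod_cast hb)]
  simp only [algebraMap_int_eq, eq_intCast] at hmap ⊢
  rw [← hmap]
  exact ⟨IsMetabolic.of_map_algebraMap, fun h => h.map _⟩

theorem isEmpty_of_isMetabolic_fromBlocks {p : ℕ} [Fact p.Prime] {m n : ℕ} (hdet : IsUnit A.det)
    {u : Fin m → ℤ} (hu : ∀ i, IsSmooth p (u i)) {r : Fin n → ℤ}
    (hr : ∀ v : Fin n → ZMod p, ∑ j, (r j : ZMod p) * v j ^ 2 = 0 → v = 0)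
    (h : IsMetabolic (fromBlocks A 0 0 (-diagonal (Sum.elim u fun j => p * r j)))) :
    IsEmpty (Fin n) := by
  have hblocks : (fromBlocks A 0 0 (-diagonal (Sum.elim u fun j => p * r j))).submatrix
      (Equiv.sumAssoc ι (Fin m) (Fin n)) (Equiv.sumAssoc ι (Fin m) (Fin n)) =
      fromBlocks (fromBlocks A 0 0 (-diagonal u)) 0 0 ((p : ℤ) • -diagonal r) := by
    have hsmul : diagonal (fun j => (p : ℤ) * r j) = (p : ℤ) • diagonal r :=
      diagonal_smul (p : ℤ) r
    rw [← fromBlocks_diagonal, hsmul]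
    ext ((i | i) | i) ((j | j) | j) <;> simp [-diagonal_neg]
  have h' := h.submatrix (Equiv.sumAssoc ι (Fin m) (Fin n))
  rw [hblocks] at h'
  refine IsMetabolic.isEmpty_of_anisotropic (f := Int.castRingHom (ZMod p)) ZMod.intCast_surjective
    (by exact_mod_cast (Fact.out : p.Prime).ne_zero)
    (fun r => ZMod.intCast_zmod_eq_zero_iff_dvd r p) ?_ (fun v hv => hr v ?_) h'
  · rw [← RingHom.mapMatrix_apply, ← RingHom.map_det, det_fromBlocks_zero₂₁, diagonal_neg,
      det_diagonal, map_mul, map_prod]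
    refine mul_ne_zero (hdet.map _).ne_zero (Finset.prod_ne_zero_iff.mpr fun i _ => ?_)
    simpa using (hu i).intCast_ne_zero
  · rw [diagonal_neg, diagonal_map (map_zero _)] at hv
    rw [← neg_eq_zero, ← Finset.sum_neg_distrib, ← hv, dotProduct]
    refine Finset.sum_congr rfl fun j _ => ?_
    rw [mulVec_diagonal, map_neg, eq_intCast]
    ring

theorem ofMatrix_mem_smoothSubgroup_of_succ (hA : A.IsSymm) (hdet : IsUnit A.det) {p : ℕ}
    (h : ofMatrix (A.map (algebraMap ℤ ℚ)) ∈ smoothSubgroup (p + 1)) :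
    ofMatrix (A.map (algebraMap ℤ ℚ)) ∈ smoothSubgroup p := by
  by_cases hp : p.Prime
  · have : Fact p.Prime := ⟨hp⟩
    obtain ⟨m, n, u, r, hu, hr, hx⟩ := exists_eq_sum_unary_add_sum_unary h
    let b : Fin m ⊕ Fin n → ℤ := Sum.elim u fun j => p * (r j : ZMod p).val
    have hb : ∀ j, b j ≠ 0 := by
      rintro (i | j)
      · exact (hu i).ne_zero
      · exact mul_ne_zero (by exact_mod_cast hp.ne_zero) (isSmooth_val (r j)).ne_zero
    have hxb : ofMatrix (A.map (algebraMap ℤ ℚ)) = ∑ j, unary (b j : ℚ) := by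
      rw [hx, Fintype.sum_sum_type]
      simp [b]
    have : IsEmpty (Fin n) := isEmpty_of_isMetabolic_fromBlocks hdet hu (by simpa using hr)
      ((ofMatrix_map_eq_sum_unary_iff hA hdet hb).mp hxb)
    rw [hx, Fintype.sum_empty (ι := Fin n), add_zero]
    exact sum_mem fun i _ => unary_mem_smoothSubgroup (hu i)
  · rwa [smoothSubgroup_succ hp] at h

theorem ofMatrix_mem_smoothSubgroup_zero (hA : A.IsSymm) (hdet : IsUnit A.det) :
    ofMatrix (A.map (algebraMap ℤ ℚ)) ∈ smoothSubgroup 0 := by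
  obtain ⟨p, hp⟩ := exists_mem_smoothSubgroup (ofMatrix (A.map (algebraMap ℤ ℚ)))
  induction p with
  | zero => exact hp
  | succ p ih => exact ih (ofMatrix_mem_smoothSubgroup_of_succ hA hdet hp)

theorem IsSmooth.eq_one_or_eq_neg_one {u : ℤ} (hu : IsSmooth 0 u) : u = 1 ∨ u = -1 := by
  rw [IsSmooth, Nat.smoothNumbers_zero, Set.mem_singleton_iff] at hu
  exact Int.natAbs_eq_iff.mp hu

end Descent

section Signature

open WittGroup

variable {ι κ : Type*} [Fintype ι] [Fintype κ] [DecidableEq ι] [DecidableEq κ]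

theorem exists_congr_diagonal_eigenvalues {A : Matrix ι ι ℝ} (hA : A.IsHermitian) :
    ∃ P Q : Matrix ι ι ℝ, P * Q = 1 ∧ Pᵀ * A * P = diagonal hA.eigenvalues := by
  refine ⟨hA.eigenvectorUnitary, star hA.eigenvectorUnitary, by simp, ?_⟩
  simpa [Unitary.conjStarAlgAut_apply, star_eq_conjTranspose] using
    hA.conjStarAlgAut_star_eigenvectorUnitary

theorem IsMetabolic.card_pos_eigenvalues_add_card_neg {A : Matrix ι ι ℝ} (hA : A.IsHermitian)
    (hdet : A.det ≠ 0) {b : κ → ℝ} (hb : ∀ j, b j ≠ 0)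
    (h : IsMetabolic (fromBlocks A 0 0 (-diagonal b))) :
    #{i | 0 < hA.eigenvalues i} + #{j | b j < 0} =
      #{i | hA.eigenvalues i < 0} + #{j | 0 < b j} := by
  obtain ⟨P, Q, hPQ, hP⟩ := exists_congr_diagonal_eigenvalues hA
  have hblocks : fromBlocks P 0 0 1 * fromBlocks Q 0 0 (1 : Matrix κ κ ℝ) = 1 := by
    simp [fromBlocks_multiply, hPQ]
  have hdiag : (fromBlocks P 0 0 (1 : Matrix κ κ ℝ))ᵀ * fromBlocks A 0 0 (-diagonal b) *
      fromBlocks P 0 0 1 = diagonal (Sum.elim hA.eigenvalues (-b)) := by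
    rw [← fromBlocks_diagonal, ← hP, Pi.neg_def, ← diagonal_neg]
    simp [fromBlocks_transpose, fromBlocks_multiply]
  have hne : ∀ i, hA.eigenvalues i ≠ 0 := by
    rw [hA.det_eq_prod_eigenvalues, Finset.prod_ne_zero_iff] at hdet
    simpa using hdet
  have hcard := (hdiag ▸ h.congr hblocks).card_pos_eq_card_neg <| by
    rintro (i | j)
    exacts [hne i, neg_ne_zero.mpr (hb j)]
  simp only [card_filter, Fintype.sum_sum_type, Sum.elim_inl, Sum.elim_inr, Pi.neg_apply,
    Left.neg_pos_iff, Left.neg_neg_iff] at hcard ⊢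
  convert! hcard

theorem sum_unary_eq_zero_of_card_eq {κ : Type*} [Fintype κ] {u : κ → ℤ}
    (hu : ∀ j, u j = 1 ∨ u j = -1) (hcard : #{j | u j < 0} = #{j | 0 < u j}) :
    ∑ j, unary (u j : ℚ) = 0 := by
  have hpos : ∑ j with 0 < u j, unary (u j : ℚ) = #{j | 0 < u j} • unary (1 : ℚ) := by
    refine Finset.sum_eq_card_nsmul fun j hj => ?_
    obtain h | h := hu j <;> simp [h] at hj ⊢
  have hneg : ∑ j with ¬0 < u j, unary (u j : ℚ) = #{j | u j < 0} • -unary (1 : ℚ) := by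
    have hiff (j) : ¬0 < u j ↔ u j < 0 := by
      obtain h | h := hu j <;> simp [h]
    simp only [hiff]
    refine Finset.sum_eq_card_nsmul fun j hj => ?_
    obtain h | h := hu j <;> simp [h, unary_neg] at hj ⊢
  rw [← Finset.sum_filter_add_sum_filter_not univ fun j => 0 < u j, hpos, hneg, hcard, smul_neg,
    add_neg_cancel]

theorem isMetabolic_of_card_pos_eigenvalues_eq {A : Matrix ι ι ℤ} (hA : A.IsSymm)
    (hdet : IsUnit A.det) (hherm : (A.map ((↑) : ℤ → ℝ)).IsHermitian)
    (hsig : #{i | 0 < hherm.eigenvalues i} = #{i | hherm.eigenvalues i < 0}) : IsMetabolic A := by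
  obtain ⟨n, u, hu, hAu⟩ :=
    exists_sum_unary_of_mem_smoothSubgroup (ofMatrix_mem_smoothSubgroup_zero hA hdet)
  have hmet := (ofMatrix_map_eq_sum_unary_iff hA hdet fun i => (hu i).ne_zero).mp hAu.symm
  have hcard : #{j | u j < 0} = #{j | 0 < u j} := by
    have hmetℝ : IsMetabolic
        (fromBlocks (A.map ((↑) : ℤ → ℝ)) 0 0 (-diagonal fun j => (u j : ℝ))) := by
      have := hmet.map (Int.castRingHom ℝ)
      rwa [fromBlocks_neg_diagonal_map] at this
    have hdetℝ : (A.map ((↑) : ℤ → ℝ)).det ≠ 0 := by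
      have := (hdet.map (Int.castRingHom ℝ)).ne_zero
      rwa [RingHom.map_det] at this
    have := hmetℝ.card_pos_eigenvalues_add_card_neg hherm hdetℝ
      (by exact_mod_cast fun i => (hu i).ne_zero)
    simpa [hsig] using this
  rw [sum_unary_eq_zero_of_card_eq (fun i => (hu i).eq_one_or_eq_neg_one) hcard] at hAu
  have := (ofMatrix_map_eq_sum_unary_iff (b := Fin.elim0) hA hdet (fun i => i.elim0)).mp
    (by simpa using hAu.symm)
  exact this.submatrix (Equiv.sumEmpty ι (Fin 0)).symm

end Signature

section Hyperbolic

theorem exists_eq_add_transpose {ι : Type*} [LinearOrder ι] {A : Matrix ι ι ℤ} (hA : A.IsSymm)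
    (heven : ∀ i, Even (A i i)) : ∃ S : Matrix ι ι ℤ, A = S + Sᵀ := by
  refine ⟨of fun i j => if i < j then A i j else if i = j then A i i / 2 else 0, ?_⟩
  ext i j
  rw [Matrix.add_apply, transpose_apply, of_apply, of_apply]
  obtain h | rfl | h := lt_trichotomy i j
  · simp [h, h.not_gt, h.ne']
  · have := Int.two_mul_ediv_two_of_even (heven i)
    rw [if_neg (lt_irrefl i), if_pos rfl]
    lia
  · simp [h, h.not_gt, h.ne', hA.apply i j]

theorem card_le_card_of_isUnit_det_transpose_mul_mul {R ι μ : Type*} [CommRing R] [Nontrivial R]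
    [Fintype ι] [Fintype μ] [DecidableEq μ] {A : Matrix ι ι R} {P : Matrix ι μ R}
    (h : IsUnit (Pᵀ * A * P).det) : Fintype.card μ ≤ Fintype.card ι := by
  have hinj : Function.Injective P.mulVecLin := by
    refine Function.Injective.of_comp (f := (Pᵀ * A).mulVecLin) ?_
    rw [← LinearMap.coe_comp, ← mulVecLin_mul, coe_mulVecLin]
    exact mulVec_injective_of_isUnit ((isUnit_iff_isUnit_det _).mpr h)
  exact card_le_of_injective R P.mulVecLin hinj

section

variable {R ι μ : Type*} [CommRing R] [Fintype ι] [DecidableEq ι] [DecidableEq μ]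

/-- The columns of `X` span a Lagrangian. The columns of `Z` form a dual basis of a complement, and
subtracting `X * (Zᵀ * S * Z)` from `Z` makes that complement isotropic as well. -/
theorem exists_transpose_mul_mul_eq_fromBlocks_of_isotropic [Finite μ] {A S : Matrix ι ι R}
    (hA : A.IsSymm) (hdet : IsUnit A.det) (hS : A = S + Sᵀ) {X : Matrix ι μ R} {Y : Matrix μ ι R}
    (hYX : Y * X = 1) (hX : Xᵀ * A * X = 0) :
    ∃ P : Matrix ι (μ ⊕ μ) R, Pᵀ * A * P = fromBlocks 0 1 1 0 := by
  have := Fintype.ofFinite μ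
  obtain ⟨Z, hXZ⟩ : ∃ Z : Matrix ι μ R, Xᵀ * A * Z = 1 := by
    refine ⟨A⁻¹ * Yᵀ, ?_⟩
    rw [Matrix.mul_assoc, mul_nonsing_inv_cancel_left _ _ hdet, ← transpose_mul, hYX, transpose_one]
  have hZX : Zᵀ * A * X = 1 := by
    have := congrArg transpose hXZ
    rwa [transpose_mul, transpose_mul, transpose_transpose, hA.eq, transpose_one,
      ← Matrix.mul_assoc] at this
  let T := Zᵀ * S * Z
  have hZ : Zᵀ * A * Z = T + Tᵀ := by
    rw [hS]
    simp only [T, transpose_mul, transpose_transpose, Matrix.mul_add, Matrix.add_mul,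
      Matrix.mul_assoc]
  refine ⟨fromCols X (Z - X * T), ?_⟩
  rw [transpose_fromCols, fromRows_mul, fromRows_mul_fromCols, fromBlocks_inj]
  refine ⟨hX, ?_, ?_, ?_⟩
  · rw [Matrix.mul_sub, ← Matrix.mul_assoc, hX, hXZ, Matrix.zero_mul, sub_zero]
  · rw [transpose_sub, transpose_mul, Matrix.sub_mul, Matrix.sub_mul, hZX, Matrix.mul_assoc Tᵀ,
      Matrix.mul_assoc Tᵀ, hX, Matrix.mul_zero, sub_zero]
  · calc (Z - X * T)ᵀ * A * (Z - X * T)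
        = Zᵀ * A * Z - Zᵀ * A * X * T - Tᵀ * (Xᵀ * A * Z) + Tᵀ * (Xᵀ * A * X) * T := by
          simp only [transpose_sub, transpose_mul, Matrix.sub_mul, Matrix.mul_sub, Matrix.mul_assoc]
          abel
      _ = 0 := by
          rw [hZ, hZX, hXZ, hX]
          simp

theorem isUnit_fromBlocks_zero_one [Fintype μ] :
    IsUnit (fromBlocks 0 1 1 0 : Matrix (μ ⊕ μ) (μ ⊕ μ) R) :=
  .of_mul_eq_one (fromBlocks 0 1 1 0) (by simp [fromBlocks_multiply])

theorem IsMetabolic.exists_transpose_mul_mul_eq_fromBlocks [Nontrivial R] {A S : Matrix ι ι R}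
    (h : IsMetabolic A) (hA : A.IsSymm) (hdet : IsUnit A.det) (hS : A = S + Sᵀ) :
    ∃ d, Fintype.card ι = 2 * d ∧
      ∃ P : Matrix ι (Fin d ⊕ Fin d) R, Pᵀ * A * P = fromBlocks 0 1 1 0 := by
  obtain ⟨d, X, Y, hYX, hX, hd⟩ := h
  obtain ⟨P, hP⟩ := exists_transpose_mul_mul_eq_fromBlocks_of_isotropic hA hdet hS hYX hX
  have hle : Fintype.card (Fin d ⊕ Fin d) ≤ Fintype.card ι :=
    card_le_card_of_isUnit_det_transpose_mul_mul (A := A) (P := P) <| by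
      rw [hP, ← isUnit_iff_isUnit_det]
      exact isUnit_fromBlocks_zero_one
  rw [Fintype.card_sum, Fintype.card_fin] at hle
  exact ⟨d, by lia, P, hP⟩

end

/-- The shuffle of `Fin (2 * d)` that turns `hyperbolicSum (2 * d)` into a `2 × 2` block matrix: the
left copy of `Fin d` enumerates the even numbers, the right copy the odd ones. -/
def evenOddEquiv (d : ℕ) : Fin d ⊕ Fin d ≃ Fin (2 * d) where
  toFun := Sum.elim (fun i => ⟨2 * i, by lia⟩) fun i => ⟨2 * i + 1, by lia⟩
  invFun k := if (k : ℕ) % 2 = 0 then .inl ⟨k / 2, by lia⟩ else .inr ⟨k / 2, by lia⟩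
  left_inv := by
    rintro (i | i)
    · simp
    · have : (2 * (i : ℕ) + 1) / 2 = i := by lia
      simp [this]
  right_inv k := by
    dsimp only
    split_ifs <;> simp [Fin.ext_iff] <;> lia

theorem hyperbolicSum_submatrix_evenOddEquiv (d : ℕ) :
    (hyperbolicSum (2 * d)).submatrix (evenOddEquiv d) (evenOddEquiv d) =
      fromBlocks 0 1 1 0 := by
  ext (i | i) (j | j) <;>
    simp [hyperbolicSum, evenOddEquiv, one_apply, Fin.ext_iff] <;> lia

theorem IsMetabolic.exists_transpose_mul_mul_eq_hyperbolicSum {n : ℕ}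
    {A : Matrix (Fin n) (Fin n) ℤ} (h : IsMetabolic A) (hA : A.IsSymm) (hdet : IsUnit A.det)
    (heven : ∀ i, Even (A i i)) :
    ∃ m, n = 2 * m ∧
      ∃ P : Matrix (Fin n) (Fin n) ℤ, IsUnit P.det ∧ Pᵀ * A * P = hyperbolicSum n := by
  obtain ⟨S, hS⟩ := exists_eq_add_transpose hA heven
  obtain ⟨m, hn, P, hP⟩ := h.exists_transpose_mul_mul_eq_fromBlocks hA hdet hS
  obtain rfl : n = 2 * m := (Fintype.card_fin n).symm.trans hn
  let e := evenOddEquiv m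
  have hPe : (P.submatrix id e.symm)ᵀ * A * P.submatrix id e.symm = hyperbolicSum (2 * m) := by
    have hH := congrArg (·.submatrix e.symm e.symm) (hyperbolicSum_submatrix_evenOddEquiv m)
    simp only [e, submatrix_submatrix, Equiv.self_comp_symm, submatrix_id_id] at hH
    rw [hH, ← hP]
    rfl
  have hunit : IsUnit (hyperbolicSum (2 * m)).det := by
    rw [← det_submatrix_equiv_self e, hyperbolicSum_submatrix_evenOddEquiv, ← isUnit_iff_isUnit_det]
    exact isUnit_fromBlocks_zero_one
  refine ⟨m, rfl, P.submatrix id e.symm, ?_, hPe⟩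
  rw [← hPe, det_mul] at hunit
  exact isUnit_of_mul_isUnit_right hunit

end Hyperbolic

/-- A symmetric integer matrix `A` which is unimodular
(`det A = ±1`), even (all diagonal entries even), and has signature zero
(as many positive as negative eigenvalues of `A` viewed as a real symmetric
matrix) has even size `n = 2m` and is integrally congruent to the direct
sum of `m` copies of `[[0,1],[1,0]]`. -/
theorem stmt1
    (n : ℕ) (A : Matrix (Fin n) (Fin n) ℤ)
    (hsym : A.transpose = A)
    (hdet : A.det = 1 ∨ A.det = -1)
    (heven : ∀ i, Even (A i i))
    (hherm : (A.map ((↑) : ℤ → ℝ)).IsHermitian)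
    (hsig : (Finset.univ.filter fun i => 0 < hherm.eigenvalues i).card =
            (Finset.univ.filter fun i => hherm.eigenvalues i < 0).card) :
    ∃ m : ℕ, n = 2 * m ∧
      ∃ P : Matrix (Fin n) (Fin n) ℤ,
        (P.det = 1 ∨ P.det = -1) ∧ P.transpose * A * P = hyperbolicSum n := by
  have hunit : IsUnit A.det := Int.isUnit_iff.mpr hdet
  have hmet : IsMetabolic A := isMetabolic_of_card_pos_eigenvalues_eq hsym hunit hherm hsig
  obtain ⟨m, hm, P, hP, hPA⟩ := hmet.exists_transpose_mul_mul_eq_hyperbolicSum hsym hunit heven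
  exact ⟨m, hm, P, Int.isUnit_iff.mp hP, hPA⟩
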